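/- Let p be a prime and n ≥ 2, m integers with 1 ≤ m < n. Assume that the trinomial Y^n + U·Y^m + V, viewed as a polynomial in Y over the field F̄_p(U,V) (the fraction field of the polynomial ring in two indeterminates U, V over an algebraic closure F̄_p of F_p), has Galois group of cardinality n! (i.e., Galois group S_n over F̄_p(U,V)). Then for every PAC field k of characteristic p, every separable field extension E/k of degree n can be realized by a trinomial Y^n + aY^m + b for some a, b ∈ k: Y^n + aY^m + b is irreducible in k[Y] and E is generated over k by one of its roots. -/

import Mathlib

/-!
The extension `E` is realized inside a one-parameter family of trinomials, by finding a rational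
point on a curve that is a twist, by `E`, of the Galois closure of the family.

**Reduction to one parameter.** A symmetric Galois group forces `n` and `m` to be coprime
(`coprime_of_card_gal`), so there are `α`, `β` with `n * α = (n - m) * β + 1`. Scaling roots turns
the generic trinomial into `Y ^ n + t ^ α * Y ^ m + t ^ β` with `t = U ^ n / V ^ (n - m)`, so this
family has Galois group `S_n` over `F̄_p(t)` (`card_gal_le_card_gal_family`). By the Nullstellensatz
the same holds over `k̄(t)` (`card_gal_map_of_isAlgClosed`).

**The twisted resolvent.** Let `i` range over the `n` embeddings of `E` in the separable closure of
`k`, and index the roots `y i` of a polynomial `P ∈ k[t][Y]` of degree `n` by them. For `w ∈ E`, the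
polynomial `Φ` with roots `∑ i, i w * y (π i)`, where `π` runs over all permutations, is symmetric in
the roots and invariant under `Gal(k)`, so it lies in `k[t][Z]` (`exists_twisted_resolvent`). For
suitable `w` its `n!` roots are distinct (`exists_injective_twist`). If `P` has Galois group `S_n`
over `k̄(t)`, they are all conjugate, so `Φ` is absolutely irreducible (`exists_geometric_resolvent`).

**Specialization.** As `k` is PAC, `Φ(t, z) = 0` has infinitely many points in `k × k`, and one of
them avoids the zeros of the resultant of `Φ` and its derivative. At this point
`z = ∑ i, i w * y (π i)` is fixed by `Gal(k)` and all the resolvent sums are distinct. Hence `Gal(k)`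
acts on the roots `y (π i)` as it acts on the embeddings `i`, and `y (π i)` generates `i E` over `k`
(`primitive_root_of_resolvent_root`).
-/

open Polynomial

/-- A field `k` is PAC (pseudo algebraically closed): every polynomial in two
variables over `k` that remains irreducible over an algebraic closure of `k`
has infinitely many zeros in `k × k`. -/
def IsPAC (k : Type*) [Field k] : Prop :=
  ∀ f : MvPolynomial (Fin 2) k,
    Irreducible (MvPolynomial.map (algebraMap k (AlgebraicClosure k)) f) →
    {x : k × k | MvPolynomial.eval ![x.1, x.2] f = 0}.Infinite

/-- The field `F̄_p(U,V)`: the fraction field of the polynomial ring in two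
indeterminates over an algebraic closure of `F_p`. -/
abbrev FpBarUV (p : ℕ) [Fact p.Prime] : Type :=
  FractionRing (MvPolynomial (Fin 2) (AlgebraicClosure (ZMod p)))

/-- The trinomial `Y^n + U·Y^m + V` over `F̄_p(U,V)`. -/
noncomputable def genericTrinomial (p : ℕ) [Fact p.Prime] (n m : ℕ) :
    Polynomial (FpBarUV p) :=
  X ^ n +
    C (algebraMap (MvPolynomial (Fin 2) (AlgebraicClosure (ZMod p))) (FpBarUV p)
        (MvPolynomial.X 0)) * X ^ m +
    C (algebraMap (MvPolynomial (Fin 2) (AlgebraicClosure (ZMod p))) (FpBarUV p)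
        (MvPolynomial.X 1))

/-! ### Polynomials with symmetric Galois group -/

/-- A monic polynomial of degree `n` with at least `n!` automorphisms has `n` distinct roots, and
every permutation of them is induced by an automorphism of any normal extension `Ω` over which it
splits. The roots are indexed by an arbitrary type `ι` with `n` elements. -/
theorem exists_roots_of_card_gal {F : Type*} [Field F] {n : ℕ} (hn : 2 ≤ n) {Q : F[X]}
    (hQ : Q.Monic) (hdeg : Q.natDegree = n) (hcard : n.factorial ≤ Nat.card Q.Gal)
    (Ω : Type*) [Field Ω] [Algebra F Ω] [Normal F Ω] (hs : (Q.map (algebraMap F Ω)).Splits)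
    (ι : Type*) [Fintype ι] (hι : Fintype.card ι = n) :
    ∃ y : ι → Ω, Function.Injective y ∧ Q.map (algebraMap F Ω) = ∏ i, (X - C (y i)) ∧
      ∀ π : Equiv.Perm ι, ∃ σ : Ω ≃ₐ[F] Ω, ∀ i, σ (y i) = y (π i) := by
  classical
  have : Fact ((Q.map (algebraMap F Ω)).Splits) := ⟨hs⟩
  have hle : Fintype.card (Q.rootSet Ω) ≤ n := by
    rw [Fintype.card_congr (Equiv.subtypeEquivRight
      (q := (· ∈ (Q.map (algebraMap F Ω)).roots.toFinset))
      fun x => by simp [Polynomial.mem_rootSet', aeval_def, eval_map]), Fintype.card_coe]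
    refine (Multiset.toFinset_card_le _).trans ((card_roots' _).trans ?_)
    rw [natDegree_map, hdeg]
  have hinj := Gal.galActionHom_injective Q Ω
  have h1 : Nat.card Q.Gal ≤ Nat.card (Equiv.Perm (Q.rootSet Ω)) :=
    Nat.card_le_card_of_injective _ hinj
  have h2 : Nat.card (Equiv.Perm (Q.rootSet Ω)) = (Fintype.card (Q.rootSet Ω)).factorial := by
    rw [Nat.card_eq_fintype_card, Fintype.card_perm]
  have hr : Fintype.card (Q.rootSet Ω) = n := by
    refine le_antisymm hle ?_
    by_contra hlt
    have h3 : (Fintype.card (Q.rootSet Ω)).factorial ≤ (n - 1).factorial :=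
      Nat.factorial_le (by omega)
    have h4 : (n - 1).factorial < n.factorial :=
      (Nat.factorial_lt (by omega)).2 (by omega)
    omega
  have hbij : Function.Bijective (Gal.galActionHom Q Ω) := by
    rw [Nat.bijective_iff_injective_and_card]
    refine ⟨hinj, le_antisymm h1 ?_⟩
    rw [h2, hr]; exact hcard
  let e : ι ≃ Q.rootSet Ω := Fintype.equivOfCardEq (hι.trans hr.symm)
  refine ⟨fun i => (e i : Ω), fun i j h => e.injective (Subtype.ext h), ?_, fun π => ?_⟩
  · have hmon : (Q.map (algebraMap F Ω)).Monic := hQ.map _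
    have hcardroots : (Q.map (algebraMap F Ω)).roots.toFinset.card = n := by
      rw [← hr, ← Fintype.card_coe]
      exact Fintype.card_congr (Equiv.subtypeEquivRight fun x => by
        simp [Polynomial.mem_rootSet', aeval_def, eval_map])
    have hnd : (Q.map (algebraMap F Ω)).roots.Nodup := by
      rw [← Multiset.toFinset_card_eq_card_iff_nodup, hcardroots]
      rw [← hs.natDegree_eq_card_roots, natDegree_map, hdeg]
    rw [hs.eq_prod_roots_of_monic hmon]
    have h5 : (Q.map (algebraMap F Ω)).roots = Finset.univ.val.map (fun i => (e i : Ω)) := by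
      rw [Multiset.Nodup.ext hnd (Multiset.Nodup.map
        (fun i j h => e.injective (Subtype.ext h)) Finset.univ.nodup)]
      intro a
      simp only [Multiset.mem_map, Finset.mem_val, Finset.mem_univ, true_and]
      constructor
      · intro ha
        refine ⟨e.symm ⟨a, ?_⟩, by simp⟩
        simpa [Polynomial.mem_rootSet', aeval_def, eval_map] using ha
      · rintro ⟨i, rfl⟩
        obtain ⟨h1, h2⟩ := Polynomial.mem_rootSet'.1 (e i).2
        rw [mem_roots h1, IsRoot, eval_map_algebraMap]
        exact h2
    rw [h5, Multiset.map_map]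
    rfl
  · obtain ⟨g, hg⟩ := hbij.2 (e.symm.trans (π.trans e))
    obtain ⟨σ, hσ⟩ := Gal.restrict_surjective Q Ω g
    refine ⟨σ, fun i => ?_⟩
    have := Gal.galActionHom_restrict Q Ω σ (e i)
    rw [hσ, hg] at this
    simpa using this.symm

/-- If `P`, seen over the larger field `F'`, has for roots the roots of `Q` multiplied by a nonzero
constant, then the Galois group of `Q` over `F'` restricts injectively to that of `P` over `F`. -/
theorem card_gal_le_of_scaleRoots {F F' : Type*} [Field F] [Field F'] [Algebra F F']
    (P : F[X]) (Q : F'[X]) (hQ : Q ≠ 0) (c : F') (hc : c ≠ 0)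
    (h : P.map (algebraMap F F') = Q.scaleRoots c) :
    Nat.card Q.Gal ≤ Nat.card P.Gal := by
  let N := Q.SplittingField
  have hc' : algebraMap F' N c ≠ 0 := by simpa using hc
  have hmap : P.map (algebraMap F N) =
      (Q.map (algebraMap F' N)).scaleRoots (algebraMap F' N c) := by
    rw [IsScalarTower.algebraMap_eq F F' N, ← Polynomial.map_map, h, map_scaleRoots]
    simpa using hQ
  have : Fact ((P.map (algebraMap F N)).Splits) :=
    ⟨by rw [hmap]; exact (SplittingField.splits Q).scaleRoots _⟩
  have hP0 : P.map (algebraMap F N) ≠ 0 := by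
    rw [hmap]; exact scaleRoots_ne_zero (by simpa using hQ) _
  let f : Q.Gal → P.Gal := fun σ => Gal.restrict P N (AlgEquiv.restrictScalars F (σ : N ≃ₐ[F'] N))
  refine Nat.card_le_card_of_injective f fun σ τ hστ => Gal.ext Q fun y hy => ?_
  have hroot : algebraMap F' N c * y ∈ P.rootSet N := by
    rw [mem_rootSet']
    refine ⟨hP0, ?_⟩
    rw [← eval_map_algebraMap, hmap]
    rw [mem_rootSet', ← eval_map_algebraMap] at hy
    have := scaleRoots_eval₂_eq_zero (p := Q.map (algebraMap F' N)) (RingHom.id N)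
      (s := algebraMap F' N c) (r := y) hy.2
    simpa [eval₂_id] using this
  have h1 := Gal.restrict_smul (p := P) (AlgEquiv.restrictScalars F (σ : N ≃ₐ[F'] N)) ⟨_, hroot⟩
  have h2 := Gal.restrict_smul (p := P) (AlgEquiv.restrictScalars F (τ : N ≃ₐ[F'] N)) ⟨_, hroot⟩
  change ((f σ • _ : P.rootSet N) : N) = _ at h1
  change ((f τ • _ : P.rootSet N) : N) = _ at h2
  rw [hστ, h2] at h1
  change (τ : N ≃ₐ[F'] N) _ = (σ : N ≃ₐ[F'] N) _ at h1
  have h3 (ρ : N ≃ₐ[F'] N) : ρ (algebraMap F' N c * y) = algebraMap F' N c * ρ y := by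
    rw [map_mul, ρ.commutes c]
  exact (mul_left_cancel₀ hc' ((h3 τ).symm.trans (h1.trans (h3 σ)))).symm

/-! ### Coprimality of the exponents -/

theorem degree_trinomial_tail {R : Type*} [CommRing R] {n m : ℕ}
    (hm : 1 ≤ m) (hmn : m < n) (a b : R) : (C a * X ^ m + C b).degree < (n : WithBot ℕ) := by
  refine (degree_add_le _ _).trans_lt (max_lt ?_ ?_)
  · exact (degree_C_mul_X_pow_le m a).trans_lt (by exact_mod_cast hmn)
  · exact degree_C_le.trans_lt (by exact_mod_cast (by omega))

theorem monic_trinomial' {R : Type*} [CommRing R] {n m : ℕ}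
    (hm : 1 ≤ m) (hmn : m < n) (a b : R) : (X ^ n + C a * X ^ m + C b).Monic := by
  rw [add_assoc]
  exact monic_X_pow_add (degree_trinomial_tail hm hmn a b)

theorem natDegree_trinomial' {R : Type*} [CommRing R] [Nontrivial R] {n m : ℕ}
    (hm : 1 ≤ m) (hmn : m < n) (a b : R) : (X ^ n + C a * X ^ m + C b).natDegree = n := by
  have h := degree_add_eq_left_of_degree_lt (p := X ^ n) (q := C a * X ^ m + C b)
    (by rw [degree_X_pow]; exact degree_trinomial_tail hm hmn a b)
  rw [add_assoc, natDegree_eq_of_degree_eq h, natDegree_X_pow]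

theorem separable_of_card_gal {F : Type*} [Field F] {n : ℕ} (hn : 2 ≤ n) {Q : F[X]}
    (hQ : Q.Monic) (hdeg : Q.natDegree = n) (hcard : n.factorial ≤ Nat.card Q.Gal) :
    Q.Separable := by
  obtain ⟨y, hy, hprod, -⟩ := exists_roots_of_card_gal hn hQ hdeg hcard (AlgebraicClosure F)
    (IsAlgClosed.splits _) (Fin n) (Fintype.card_fin n)
  rw [← Polynomial.separable_map (algebraMap F (AlgebraicClosure F)), hprod]
  exact separable_prod_X_sub_C_iff.2 hy

/-- A trinomial with symmetric Galois group over a field containing an algebraically closed field has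
coprime exponents. Indeed let a prime `d` divide both exponents. If `d` is the characteristic, the
trinomial is inseparable. Otherwise multiplication by a primitive `d`-th root of unity is a
permutation of the roots that commutes with the Galois action, which is impossible for the full
symmetric group on more than two roots. -/
theorem coprime_of_card_gal {F : Type*} [Field F] [IsAlgClosed F] {K : Type*} [Field K]
    [Algebra F K] {n m : ℕ} (hn : 2 ≤ n) (hm : 1 ≤ m) (hmn : m < n) (a b : K) (hb : b ≠ 0)
    (hcard : n.factorial ≤ Nat.card (X ^ n + C a * X ^ m + C b).Gal) : n.Coprime m := by
  have hdeg : (X ^ n + C a * X ^ m + C b).natDegree = n := natDegree_trinomial' hm hmn a b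
  have hQ : (X ^ n + C a * X ^ m + C b).Monic := monic_trinomial' hm hmn a b
  by_contra hnc
  obtain ⟨d, hd, ⟨e, rfl⟩, ⟨l, rfl⟩⟩ := Nat.Prime.not_coprime_iff_dvd.1 hnc
  by_cases hdF : (d : F) = 0
  -- when `d` is the characteristic, the trinomial has zero derivative
  · have hdK : (d : K) = 0 := by
      rw [← map_natCast (algebraMap F K), hdF, map_zero]
    have hder : derivative (X ^ (d * e) + C a * X ^ (d * l) + C b) = 0 := by
      simp [derivative_X_pow, hdK]
    have hsep := separable_of_card_gal hn hQ hdeg hcard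
    rw [Separable, hder, isCoprime_zero_right] at hsep
    have := natDegree_eq_zero_of_isUnit hsep
    omega
  · have : NeZero (d : F) := ⟨hdF⟩
    obtain ⟨ζ, hζ⟩ := HasEnoughRootsOfUnity.exists_primitiveRoot F d
    obtain ⟨y, hy, hprod, hperm⟩ := exists_roots_of_card_gal hn hQ hdeg hcard
      (AlgebraicClosure K) (IsAlgClosed.splits _) (Fin (d * e)) (Fintype.card_fin _)
    have hroot : ∀ z : AlgebraicClosure K, (z ^ (d * e) + algebraMap K _ a * z ^ (d * l) +
        algebraMap K _ b = 0 ↔ ∃ i, y i = z) := by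
      intro z
      have h1 := congrArg (eval z) hprod
      rw [eval_prod] at h1
      simp only [Polynomial.map_add, Polynomial.map_pow, map_X, Polynomial.map_mul, map_C, eval_add,
        eval_pow, eval_X, eval_mul, eval_C, eval_sub] at h1
      rw [h1, Finset.prod_eq_zero_iff]
      simp [sub_eq_zero, eq_comm]
    let i0 : Fin (d * e) := ⟨0, by omega⟩
    have hy0 := (hroot (y i0)).2 ⟨i0, rfl⟩
    have hy0ne : y i0 ≠ 0 := by
      intro h
      have hl : d * l ≠ 0 := by omega
      have he : d * e ≠ 0 := by omega
      rw [h, zero_pow hl, zero_pow he] at hy0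
      simp [hb] at hy0
    set ζ' : AlgebraicClosure K := algebraMap K _ (algebraMap F K ζ) with hζ'
    have hζd : ζ' ^ d = 1 := by rw [hζ', ← map_pow, ← map_pow, hζ.pow_eq_one, map_one, map_one]
    have hζ1 : ζ' ≠ 1 := by
      intro h
      apply hζ.ne_one hd.one_lt
      apply (algebraMap F K).injective
      apply (algebraMap K (AlgebraicClosure K)).injective
      rw [← hζ', h, map_one, map_one]
    obtain ⟨j, hj⟩ := (hroot (ζ' * y i0)).1 (by
      rw [mul_pow, mul_pow, pow_mul ζ', pow_mul ζ', hζd, one_pow, one_pow, one_mul, one_mul]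
      exact hy0)
    have hj0 : j ≠ i0 := by
      rintro rfl
      exact hζ1 (mul_right_cancel₀ hy0ne (by rw [one_mul]; exact hj.symm))
    have hd2 := hd.two_le
    have hl1 : 1 ≤ l := Nat.pos_of_ne_zero (by rintro rfl; omega)
    have h3 : 2 < d * e := by nlinarith
    obtain ⟨i, hi⟩ : ∃ i : Fin (d * e), i ∉ ({i0, j} : Finset (Fin (d * e))) := by
      by_contra! hall
      have h4 : (Finset.univ : Finset (Fin (d * e))).card ≤ ({i0, j} : Finset _).card :=
        Finset.card_le_card fun x _ => hall x
      have := Finset.card_le_two (a := i0) (b := j)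
      rw [Finset.card_univ, Fintype.card_fin] at h4
      omega
    simp only [Finset.mem_insert, Finset.mem_singleton, not_or] at hi
    -- an automorphism fixing `y i0` must fix `ζ * y i0 = y j`, so the transposition of `j` with a
    -- third index `i` is not realised
    obtain ⟨σ, hσ⟩ := hperm (Equiv.swap j i)
    have h5 := hσ i0
    rw [Equiv.swap_apply_of_ne_of_ne hj0.symm (Ne.symm hi.1)] at h5
    have h6 := hσ j
    rw [Equiv.swap_apply_left, hj, map_mul, h5, hζ', AlgEquiv.commutes, ← hζ', ← hj] at h6
    exact hi.2 (hy h6).symm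

/-! ### Reduction to a one-parameter family -/

theorem scaleRoots_trinomial {R : Type*} [CommRing R] [Nontrivial R] {n m : ℕ}
    (hm : 1 ≤ m) (hmn : m < n) (a b c : R) :
    (X ^ n + C a * X ^ m + C b).scaleRoots c =
      X ^ n + C (c ^ (n - m) * a) * X ^ m + C (c ^ n * b) := by
  ext i
  rw [coeff_scaleRoots, natDegree_trinomial' hm hmn]
  simp only [coeff_add, coeff_X_pow, coeff_C_mul, coeff_C]
  by_cases h1 : i = n
  · subst h1
    have h0 : i ≠ 0 := by omega
    simp [hmn.ne', h0]
  · by_cases h2 : i = m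
    · subst h2
      have h0 : i ≠ 0 := by omega
      simp [h1, h0, mul_comm]
    · by_cases h3 : i = 0
      · subst h3
        simp [h1, h2, mul_comm]
      · simp [h1, h2, h3]

/-- Exponents `α, β` for which `t = (U ^ n) / (V ^ (n - m))` satisfies `t ^ α = c ^ (n - m) * U` and
`t ^ β = c ^ n * V` with `c = U ^ β / V ^ α`. -/
theorem exists_exponents {n m : ℕ} (hm : 1 ≤ m) (hmn : m < n) (h : n.Coprime m) :
    ∃ α β : ℕ, n * α = (n - m) * β + 1 := by
  have hc : n.Coprime (n - m) := (Nat.coprime_self_sub_right hmn.le).2 h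
  rcases (by omega : n - m = 1 ∨ 1 < n - m) with h1 | h1
  · exact ⟨1, n - 1, by rw [h1]; omega⟩
  · obtain ⟨α, -, hα⟩ := Nat.exists_mul_mod_eq_one_of_coprime hc h1
    refine ⟨α, n * α / (n - m), ?_⟩
    have := Nat.div_add_mod (n * α) (n - m)
    omega

theorem transcendental_of_notMem_range {F K : Type*} [Field F] [IsAlgClosed F] [Field K]
    [Algebra F K] (t : K) (ht : t ∉ Set.range (algebraMap F K)) : Transcendental F t := by
  intro h
  have h1 := minpoly.irreducible h.isIntegral
  exact ht (minpoly.mem_range_of_degree_eq_one F t (IsAlgClosed.degree_eq_one_of_irreducible F h1))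

/-- The one-parameter family `Y ^ n + t ^ α * Y ^ m + t ^ β` in `R[t][Y]`. The outer variable is `Y`,
the inner one is the parameter `t`. -/
noncomputable def trinomialFamily (R : Type*) [CommRing R] (n m α β : ℕ) : R[X][X] :=
  X ^ n + C (X ^ α) * X ^ m + C (X ^ β)

/-- Scaling the roots of `Y ^ n + U * Y ^ m + V` by `U ^ β / V ^ α` turns it into the member of the
one-parameter family at `t = U ^ n / V ^ (n - m)`. Since `t` is transcendental, the Galois group of
the family over `F(t)` is at least as large as that of the generic trinomial over `F(U, V)`. -/
theorem card_gal_le_card_gal_family {F : Type*} [Field F] [IsAlgClosed F] {n m α β : ℕ}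
    (hm : 1 ≤ m) (hmn : m < n) (hαβ : n * α = (n - m) * β + 1)
    {K : Type*} [Field K] [Algebra (MvPolynomial (Fin 2) F) K]
    [IsFractionRing (MvPolynomial (Fin 2) F) K] :
    Nat.card (X ^ n + C (algebraMap (MvPolynomial (Fin 2) F) K (MvPolynomial.X 0)) * X ^ m +
      C (algebraMap (MvPolynomial (Fin 2) F) K (MvPolynomial.X 1))).Gal ≤
    Nat.card ((trinomialFamily F n m α β).map
      (algebraMap F[X] (FractionRing F[X]))).Gal := by
  let : Algebra F K := ((algebraMap (MvPolynomial (Fin 2) F) K).comp MvPolynomial.C).toAlgebra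
  have hinj := IsFractionRing.injective (MvPolynomial (Fin 2) F) K
  set U := algebraMap (MvPolynomial (Fin 2) F) K (MvPolynomial.X 0) with hU
  set V := algebraMap (MvPolynomial (Fin 2) F) K (MvPolynomial.X 1) with hV
  have hU0 : U ≠ 0 := fun h => MvPolynomial.X_ne_zero (R := F) (0 : Fin 2)
    (hinj (h.trans (map_zero _).symm))
  have hV0 : V ≠ 0 := fun h => MvPolynomial.X_ne_zero (R := F) (1 : Fin 2)
    (hinj (h.trans (map_zero _).symm))
  set t : K := U ^ n / V ^ (n - m) with ht
  have htr : Transcendental F t := by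
    apply transcendental_of_notMem_range
    rintro ⟨a, ha⟩
    rw [ht, eq_div_iff (pow_ne_zero _ hV0)] at ha
    have h1 : (MvPolynomial.C a * MvPolynomial.X 1 ^ (n - m) : MvPolynomial (Fin 2) F) =
        MvPolynomial.X 0 ^ n := by
      apply hinj
      rw [map_mul, map_pow, map_pow]
      exact ha
    have h2 := congrArg (MvPolynomial.eval ![1, 0]) h1
    have h3 : n - m ≠ 0 := by omega
    simp [h3] at h2
  have hevinj : Function.Injective (aeval t : F[X] →ₐ[F] K).toRingHom :=
    transcendental_iff_injective.1 htr
  let : Algebra (FractionRing F[X]) K := (IsFractionRing.lift hevinj).toAlgebra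
  have hX : algebraMap (FractionRing F[X]) K (algebraMap F[X] (FractionRing F[X]) X) = t := by
    have : algebraMap (FractionRing F[X]) K (algebraMap F[X] (FractionRing F[X]) X) =
      (aeval t : F[X] →ₐ[F] K).toRingHom X := IsFractionRing.lift_algebraMap hevinj X
    rw [this]; exact aeval_X t
  refine card_gal_le_of_scaleRoots _ _ (monic_trinomial' hm hmn _ _).ne_zero (U ^ β / V ^ α)
    (div_ne_zero (pow_ne_zero _ hU0) (pow_ne_zero _ hV0)) ?_
  rw [scaleRoots_trinomial hm hmn]
  simp only [trinomialFamily, Polynomial.map_add, Polynomial.map_mul, Polynomial.map_pow, map_X,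
    map_C, map_pow, hX]
  have e1 : (U ^ β / V ^ α) ^ (n - m) * U = t ^ α := by
    rw [ht, div_pow, div_pow, ← pow_mul, ← pow_mul, ← pow_mul, ← pow_mul, hαβ, mul_comm β,
      mul_comm α, pow_succ]
    ring
  have e2 : (U ^ β / V ^ α) ^ n * V = t ^ β := by
    rw [ht, div_pow, div_pow, ← pow_mul, ← pow_mul, ← pow_mul, ← pow_mul, mul_comm α, hαβ,
      mul_comm β, pow_succ]
    field_simp
  rw [e1, e2, C_pow, C_pow]

/-! ### Extension of algebraically closed constants -/

/-- Weak Nullstellensatz: a nonzero finitely generated algebra over an algebraically closed field has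
a rational point. -/
theorem exists_algHom_of_finiteType (F A : Type*) [Field F] [IsAlgClosed F] [CommRing A]
    [Nontrivial A] [Algebra F A] [Algebra.FiniteType F A] : Nonempty (A →ₐ[F] F) := by
  obtain ⟨M, hM⟩ := Ideal.exists_maximal A
  let := Ideal.Quotient.field M
  have := finite_of_finite_type_of_isJacobsonRing F (A ⧸ M)
  exact ⟨(IsAlgClosed.lift : A ⧸ M →ₐ[F] F).comp (Ideal.Quotient.mkₐ F M)⟩

/-- A monic bivariate polynomial that is irreducible over an algebraically closed field stays
irreducible over any extension field: the coefficients of a factorization generate a finitely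
generated algebra, and a rational point of it specializes the factorization to the base field. -/
theorem irreducible_map_of_isAlgClosed {F K : Type*} [Field F] [IsAlgClosed F] [Field K]
    [Algebra F K] {q : F[X][X]} (hq : q.Monic) (hirr : Irreducible q) :
    Irreducible (q.map (mapRingHom (algebraMap F K))) := by
  classical
  have hinjFK : Function.Injective (mapRingHom (algebraMap F K)) :=
    map_injective _ (algebraMap F K).injective
  have hq1 : q ≠ 1 := hirr.ne_one
  refine (irreducible_of_monic (hq.map _) ?_).2 fun g h hg hh hgh => ?_
  · intro h
    exact hq1 (map_injective _ hinjFK (by rw [h, Polynomial.map_one]))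
  -- the finitely many coefficients of the factors generate a finitely generated `F`-algebra
  let cs : K[X][X] → Finset K := fun f => f.support.biUnion fun i => (f.coeff i).coeffs
  let S : Finset K := cs g ∪ cs h
  let A := Algebra.adjoin F (S : Set K)
  have : Algebra.FiniteType F A := (Subalgebra.fg_iff_finiteType _).1 ⟨S, rfl⟩
  obtain ⟨φ⟩ := exists_algHom_of_finiteType F A
  have hinjA : Function.Injective (mapRingHom (algebraMap A K)) :=
    map_injective _ Subtype.val_injective
  have hlift : ∀ f : K[X][X], cs f ⊆ S →
      ∃ f' : A[X][X], f'.map (mapRingHom (algebraMap A K)) = f := by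
    intro f hf
    rw [← mem_lifts, lifts_iff_coeff_lifts]
    intro i
    change f.coeff i ∈ (lifts (algebraMap A K) : Set _)
    rw [SetLike.mem_coe, lifts_iff_coeff_lifts]
    intro j
    by_cases hj : (f.coeff i).coeff j = 0
    · exact ⟨0, by rw [hj, map_zero]⟩
    · have hi : i ∈ f.support := by
        rw [mem_support_iff]; intro h0; rw [h0] at hj; simp at hj
      have : (f.coeff i).coeff j ∈ S := hf (Finset.mem_biUnion.2 ⟨i, hi, coeff_mem_coeffs hj⟩)
      exact ⟨⟨_, Algebra.subset_adjoin this⟩, rfl⟩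
  obtain ⟨g', hg'⟩ := hlift g Finset.subset_union_left
  obtain ⟨h', hh'⟩ := hlift h Finset.subset_union_right
  have hg'm : g'.Monic := hinjA.monic_map_iff.2 (hg'.symm ▸ hg)
  have hh'm : h'.Monic := hinjA.monic_map_iff.2 (hh'.symm ▸ hh)
  have hprod : g' * h' = q.map (mapRingHom (algebraMap F A)) := by
    apply map_injective _ hinjA
    rw [Polynomial.map_mul, hg', hh', hgh, Polynomial.map_map, mapRingHom_comp,
      ← IsScalarTower.algebraMap_eq]
  have hspec : g'.map (mapRingHom (φ : A →+* F)) * h'.map (mapRingHom (φ : A →+* F)) = q := by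
    rw [← Polynomial.map_mul, hprod, Polynomial.map_map, mapRingHom_comp, φ.comp_algebraMap]
    simp
  have hone : ∀ f' : A[X][X], f'.Monic → f'.map (mapRingHom (φ : A →+* F)) = 1 →
      f'.map (mapRingHom (algebraMap A K)) = 1 := by
    intro f' hf' h1
    have h2 : f'.natDegree = 0 := by
      rw [← hf'.natDegree_map (mapRingHom (φ : A →+* F)), h1, natDegree_one]
    rw [hf'.natDegree_eq_zero.1 h2, Polynomial.map_one]
  rcases (irreducible_of_monic hq hq1).1 hirr _ _ (hg'm.map _) (hh'm.map _) hspec with h1 | h1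
  · left; rw [← hg']; exact hone _ hg'm h1
  · right; rw [← hh']; exact hone _ hh'm h1

set_option maxHeartbeats 1000000 in
/-- Enlarging an algebraically closed constant field `F` to `K` does not shrink the symmetric Galois
group of a polynomial over `F(t)`: the minimal polynomial of a primitive element of the splitting
field, of degree `n!`, remains irreducible over `K(t)`. The rational function fields are taken as
abstract fraction fields `F₁` and `F₂`. -/
theorem card_gal_map_of_isAlgClosed {F K : Type*} [Field F] [IsAlgClosed F] [Field K]
    [Algebra F K] (F₁ F₂ : Type*) [Field F₁] [Field F₂] [Algebra F[X] F₁] [Algebra K[X] F₂]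
    [IsFractionRing F[X] F₁] [IsFractionRing K[X] F₂] {n : ℕ} (hn : 2 ≤ n)
    {P : F[X][X]} (hP : P.Monic) (hdeg : P.natDegree = n)
    (hcard : n.factorial ≤ Nat.card (P.map (algebraMap F[X] F₁)).Gal) :
    n.factorial ≤ Nat.card ((P.map (mapRingHom (algebraMap F K))).map
      (algebraMap K[X] F₂)).Gal := by
  have hinjFK : Function.Injective (mapRingHom (algebraMap F K)) :=
    map_injective _ (algebraMap F K).injective
  have hinj : Function.Injective ((algebraMap K[X] F₂).comp
      (mapRingHom (algebraMap F K))) :=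
    (IsFractionRing.injective K[X] F₂).comp hinjFK
  let : Algebra F₁ F₂ := (IsFractionRing.lift hinj).toAlgebra
  have hj : (algebraMap F₁ F₂).comp
      (algebraMap F[X] F₁) =
      (algebraMap K[X] F₂).comp (mapRingHom (algebraMap F K)) :=
    RingHom.ext fun x => IsFractionRing.lift_algebraMap hinj x
  set P₁ := P.map (algebraMap F[X] F₁) with hP₁
  set P₂ := (P.map (mapRingHom (algebraMap F K))).map
      (algebraMap K[X] F₂) with hP₂
  have h12 : P₁.map (algebraMap F₁ F₂) = P₂ := by
    rw [hP₁, hP₂, Polynomial.map_map, Polynomial.map_map, hj]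
  have hP₁m : P₁.Monic := hP.map _
  have hsep₁ : P₁.Separable := separable_of_card_gal hn hP₁m
    (by rw [hP₁, hP.natDegree_map, hdeg]) hcard
  have hsep₂ : P₂.Separable := h12 ▸ hsep₁.map
  rw [Gal.card_of_separable hsep₁] at hcard
  rw [Gal.card_of_separable hsep₂]
  have : IsGalois F₁ P₁.SplittingField := IsGalois.of_separable_splitting_field hsep₁
  -- a primitive element, integral over `F[X]`
  obtain ⟨α, hα⟩ := Field.exists_primitive_element F₁ P₁.SplittingField
  have hαalg : IsAlgebraic F[X] α :=
    (IsFractionRing.isAlgebraic_iff F[X] F₁ P₁.SplittingField).2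
      (Algebra.IsAlgebraic.isAlgebraic α)
  obtain ⟨y, hy0, hz⟩ := hαalg.exists_integral_multiple
  set z := y • α with hzdef
  have hztop : IntermediateField.adjoin F₁ {z} = ⊤ := by
    rw [eq_top_iff, ← hα, IntermediateField.adjoin_simple_le_iff]
    have hy' : algebraMap F[X] F₁ y ≠ 0 := by simpa using hy0
    have : α = (algebraMap F[X] F₁ y)⁻¹ • z := by
      rw [hzdef, ← IsScalarTower.algebraMap_smul F₁ y α, smul_smul,
        inv_mul_cancel₀ hy', one_smul]
    rw [this]
    exact IntermediateField.smul_mem _ (IntermediateField.mem_adjoin_simple_self _ z)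
  have hqdeg : (minpoly F[X] z).natDegree =
      Module.finrank F₁ P₁.SplittingField := by
    rw [← (Field.primitive_element_iff_minpoly_natDegree_eq _ z).1 hztop,
      minpoly.isIntegrallyClosed_eq_field_fractions' F₁ hz,
      (minpoly.monic hz).natDegree_map]
  have hqirr : Irreducible (((minpoly F[X] z).map (mapRingHom (algebraMap F K))).map
      (algebraMap K[X] F₂)) :=
    (((minpoly.monic hz).map _).irreducible_iff_irreducible_map_fraction_map).1
      (irreducible_map_of_isAlgClosed (minpoly.monic hz) (minpoly.irreducible hz))
  have hsplit : (P₁.map (algebraMap F₁ P₂.SplittingField)).Splits := by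
    rw [IsScalarTower.algebraMap_eq F₁ F₂,
      ← Polynomial.map_map, h12]
    exact SplittingField.splits P₂
  let ψ : P₁.SplittingField →ₐ[F₁] P₂.SplittingField :=
    SplittingField.lift P₁ hsplit
  have hroot : aeval (ψ z) (((minpoly F[X] z).map (mapRingHom (algebraMap F K))).map
      (algebraMap K[X] F₂)) = 0 := by
    have h1 := congrArg ψ (minpoly.aeval F[X] z)
    rw [map_zero, aeval_def, ← AlgHom.coe_toRingHom, hom_eval₂] at h1
    rw [aeval_def, eval₂_map, eval₂_map, RingHom.comp_assoc, ← hj, ← RingHom.comp_assoc,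
      ← IsScalarTower.algebraMap_eq, ← ψ.comp_algebraMap, RingHom.comp_assoc,
      ← IsScalarTower.algebraMap_eq]
    exact h1
  have hmin := minpoly.eq_of_irreducible_of_monic hqirr hroot (((minpoly.monic hz).map _).map _)
  calc n.factorial ≤ _ := hcard
    _ = (minpoly F₂ (ψ z)).natDegree := by
      rw [← hmin, (((minpoly.monic hz).map _)).natDegree_map, (minpoly.monic hz).natDegree_map,
        hqdeg]
    _ ≤ _ := minpoly.natDegree_le _

/-! ### Twisted resolvents -/

/-- The linear resolvent with weights `w` of a polynomial with roots `y`: its roots are the sums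
`∑ i, w i * y (π i)`, one for each permutation `π` of the index set. -/
noncomputable def permResolvent {ι S : Type*} [Fintype ι] [DecidableEq ι] [CommRing S]
    (w y : ι → S) : S[X] :=
  ∏ π : Equiv.Perm ι, (X - C (∑ i, w i * y (π i)))

section
variable {ι S T : Type*} [Fintype ι] [DecidableEq ι] [CommRing S] [CommRing T]

theorem permResolvent_map (f : S →+* T) (w y : ι → S) :
    (permResolvent w y).map f = permResolvent (fun i => f (w i)) (fun i => f (y i)) := by
  simp [permResolvent, Polynomial.map_prod, Polynomial.map_sum]

theorem permResolvent_monic (w y : ι → S) : (permResolvent w y).Monic :=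
  monic_prod_of_monic _ _ fun _ _ => monic_X_sub_C _

theorem permResolvent_comp_right (w y : ι → S) (ρ : Equiv.Perm ι) :
    permResolvent w (fun i => y (ρ i)) = permResolvent w y := by
  unfold permResolvent
  exact Fintype.prod_equiv (Equiv.mulLeft ρ) _ _ fun π => by simp

theorem permResolvent_comp_left (w y : ι → S) (ρ : Equiv.Perm ι) :
    permResolvent (fun i => w (ρ i)) y = permResolvent w y := by
  unfold permResolvent
  refine Fintype.prod_equiv (Equiv.mulRight ρ⁻¹) _ _ fun π => ?_
  congr 2
  exact Fintype.sum_equiv ρ _ _ fun i => by simp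

theorem permResolvent_natDegree [Nontrivial S] (w y : ι → S) :
    (permResolvent w y).natDegree = (Fintype.card ι).factorial := by
  unfold permResolvent
  rw [natDegree_prod_of_monic _ _ fun _ _ => monic_X_sub_C _]
  simp only [natDegree_X_sub_C]
  simp [Fintype.card_perm]

end

/-- The generic resolvent, with indeterminate roots and weights in a Galois extension `ks` of `k` that
are permuted by the Galois group, is the image of a monic polynomial whose coefficients are
polynomials over `k` in the elementary symmetric functions of the roots. -/
theorem exists_descended_resolvent {k ks ι : Type*} [Field k] [Field ks] [Algebra k ks]
    [IsGalois k ks] [Fintype ι] [DecidableEq ι] {n : ℕ} (hn : Fintype.card ι = n) (w : ι → ks)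
    (hw : ∀ τ : ks ≃ₐ[k] ks, ∃ ρ : Equiv.Perm ι, ∀ i, τ (w i) = w (ρ i)) :
    ∃ Ψ : (MvPolynomial (Fin n) k)[X], Ψ.Monic ∧
      Ψ.map (MvPolynomial.aeval (R := k)
        (fun i : Fin n => MvPolynomial.esymm ι ks (i + 1))).toRingHom =
      permResolvent (fun i => MvPolynomial.C (w i)) MvPolynomial.X := by
  set R : (MvPolynomial ι ks)[X] :=
    permResolvent (fun i : ι => MvPolynomial.C (w i)) MvPolynomial.X with hR
  set es : Fin n → MvPolynomial ι ks := fun i => MvPolynomial.esymm ι ks (i + 1) with hes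
  set φ := (MvPolynomial.aeval (R := k) es).toRingHom with hφ
  set φ' : MvPolynomial (Fin n) ks →ₐ[ks] MvPolynomial ι ks := MvPolynomial.aeval es with hφ'
  have hφφ' : φ = (φ' : _ →+* _).comp (MvPolynomial.map (algebraMap k ks)) := by
    refine MvPolynomial.ringHom_ext (fun r => ?_) fun i => ?_
    · simp [hφ, hφ', IsScalarTower.algebraMap_apply k ks (MvPolynomial ι ks)]
    · simp [hφ, hφ']
  have hφ'inj : Function.Injective φ' := by
    intro a b hab
    apply MvPolynomial.esymmAlgHom_injective (σ := ι) (R := ks) hn.ge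
    apply Subtype.ext
    rw [MvPolynomial.esymmAlgHom_apply, MvPolynomial.esymmAlgHom_apply]
    exact hab
  have hφinj : Function.Injective φ := by
    rw [hφφ']
    exact hφ'inj.comp (MvPolynomial.map_injective _ (algebraMap k ks).injective)
  have hlift : R ∈ lifts φ := by
    rw [lifts_iff_coeff_lifts]
    intro j
    -- symmetric in the roots, hence a polynomial `d` in the elementary symmetric functions
    have hsymm : (R.coeff j).IsSymmetric := by
      intro ρ
      have h1 : R.map (MvPolynomial.rename ρ : _ →ₐ[ks] _).toRingHom = R := by
        rw [hR, permResolvent_map]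
        simp only [AlgHom.toRingHom_eq_coe, RingHom.coe_coe, MvPolynomial.rename_C,
          MvPolynomial.rename_X]
        exact permResolvent_comp_right _ _ ρ
      have h2 := congrArg (fun f => coeff f j) h1
      simpa using h2
    obtain ⟨d, hd⟩ := MvPolynomial.esymmAlgHom_surjective (σ := ι) (R := ks) hn.le
      ⟨R.coeff j, hsymm⟩
    have hd' : φ' d = R.coeff j :=
      (MvPolynomial.esymmAlgHom_apply d).symm.trans (congrArg Subtype.val hd)
    -- permuting the weights does not change the resolvent, so `d` has coefficients in `k`
    have hfix : ∀ τ : ks ≃ₐ[k] ks, MvPolynomial.map (τ : ks →+* ks) d = d := by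
      intro τ
      apply hφ'inj
      have h1 : R.map (MvPolynomial.map (τ : ks →+* ks)) = R := by
        rw [hR, permResolvent_map]
        obtain ⟨ρ, hρ⟩ := hw τ
        simp only [MvPolynomial.map_C, MvPolynomial.map_X, RingHom.coe_coe, hρ]
        exact permResolvent_comp_left (fun i : ι => MvPolynomial.C (w i)) _ ρ
      have h2 := congrArg (fun f => coeff f j) h1
      simp only [coeff_map] at h2
      have h3 : φ' (MvPolynomial.map (τ : ks →+* ks) d) =
          MvPolynomial.map (τ : ks →+* ks) (φ' d) := by
        have : φ'.toRingHom.comp (MvPolynomial.map (τ : ks →+* ks)) =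
            (MvPolynomial.map (τ : ks →+* ks)).comp φ'.toRingHom := by
          refine MvPolynomial.ringHom_ext (fun r => ?_) fun i => ?_
          · simp [hφ']
          · simp [hφ', hes, MvPolynomial.map_esymm]
        exact RingHom.congr_fun this d
      rw [h3, hd', h2]
    have hdk : d ∈ Set.range (MvPolynomial.map (σ := Fin n) (algebraMap k ks)) := by
      rw [MvPolynomial.mem_range_map_iff_coeffs_subset]
      intro c hc
      rw [Finset.mem_coe, MvPolynomial.mem_coeffs_iff] at hc
      obtain ⟨s, -, rfl⟩ := hc
      rw [InfiniteGalois.mem_range_algebraMap_iff_fixed]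
      intro τ
      have := congrArg (MvPolynomial.coeff s) (hfix τ)
      rw [MvPolynomial.coeff_map] at this
      exact this
    obtain ⟨d', rfl⟩ := hdk
    exact ⟨d', by rw [hφφ', ← hd']; rfl⟩
  obtain ⟨Ψ, hΨ⟩ := (mem_lifts _).1 hlift
  refine ⟨Ψ, hφinj.monic_map_iff.2 ?_, hΨ⟩
  rw [hΨ]
  exact permResolvent_monic _ _

/-- Vieta's formulas, in the form that expresses the elementary symmetric functions of the roots
through the coefficients. -/
theorem coeff_prod_X_sub_C {ι S : Type*} [Fintype ι] [CommRing S] [Nontrivial S] {n : ℕ}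
    (hn : Fintype.card ι = n) (y : ι → S) (i : Fin n) :
    (-1) ^ (i + 1 : ℕ) * (∏ j, (X - C (y j))).coeff (n - (i + 1)) =
      MvPolynomial.aeval y (MvPolynomial.esymm ι S (i + 1)) := by
  rw [MvPolynomial.aeval_esymm_eq_multiset_esymm]
  have h := Multiset.prod_X_sub_C_coeff (Finset.univ.val.map y) (k := n - (i + 1)) (by simp [hn])
  rw [Multiset.map_map] at h
  change (∏ j, (X - C (y j))).coeff (n - (i + 1)) = _ at h
  rw [h]
  have h2 : Multiset.card (Finset.univ.val.map y) - (n - (i + 1)) = i + 1 := by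
    simp [hn]; omega
  rw [h2, ← mul_assoc, ← pow_add, ← two_mul, pow_mul]
  simp

/-- The resolvent of `P ∈ A[Y]` twisted by a Galois-stable family of weights `w`, defined over the
`k`-algebra `A`: under any homomorphism `h` to a ring `S` that contains the weights (through `f`)
and over which `P` splits, it becomes the linear resolvent of the roots of `P`. -/
theorem exists_twisted_resolvent {k ks ι A : Type*} [Field k] [Field ks] [Algebra k ks]
    [IsGalois k ks] [Fintype ι] [DecidableEq ι] {n : ℕ} (hn : Fintype.card ι = n) (w : ι → ks)
    (hw : ∀ τ : ks ≃ₐ[k] ks, ∃ ρ : Equiv.Perm ι, ∀ i, τ (w i) = w (ρ i))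
    [CommRing A] [Algebra k A] (P : A[X]) :
    ∃ Φ : A[X], Φ.Monic ∧ ∀ (S : Type*) [CommRing S] [Nontrivial S] (h : A →+* S) (f : ks →+* S)
      (y : ι → S),
      h.comp (algebraMap k A) = f.comp (algebraMap k ks) → P.map h = ∏ i, (X - C (y i)) →
      Φ.map h = permResolvent (fun i => f (w i)) y := by
  obtain ⟨Ψ, hΨm, hΨ⟩ := exists_descended_resolvent hn w hw
  refine ⟨Ψ.map (MvPolynomial.aeval (R := k)
    (fun i : Fin n => (-1) ^ (i + 1 : ℕ) * P.coeff (n - (i + 1)))).toRingHom, hΨm.map _, ?_⟩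
  intro S _ _ h f y hcompat hP
  have h1 := congrArg (Polynomial.map (MvPolynomial.eval₂Hom f y)) hΨ
  rw [permResolvent_map, Polynomial.map_map] at h1
  simp only [MvPolynomial.coe_eval₂Hom, MvPolynomial.eval₂_C, MvPolynomial.eval₂_X] at h1
  rw [← h1, Polynomial.map_map]
  congr 1
  refine MvPolynomial.ringHom_ext (fun r => ?_) fun i => ?_
  · have := RingHom.congr_fun hcompat r
    simpa [IsScalarTower.algebraMap_apply k ks (MvPolynomial _ ks)] using this
  · have h2 := coeff_prod_X_sub_C hn y i
    rw [← hP, coeff_map] at h2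
    simp only [AlgHom.toRingHom_eq_coe, RingHom.coe_comp, RingHom.coe_coe, Function.comp_apply,
      MvPolynomial.aeval_X, map_mul, map_pow, map_neg, map_one]
    rw [h2, ← MvPolynomial.map_esymm ι ks _ f]
    simp [MvPolynomial.aeval_def, MvPolynomial.eval₂_map, MvPolynomial.coe_eval₂Hom]

/-! ### Weights, irreducibility and rational points -/

/-- For distinct `y i`, some weight `w ∈ E` makes all the resolvent sums distinct. Each coincidence of
two sums confines `w` to a `k`-subspace of `E`, which is proper by independence of the embeddings
of `E`, and a vector space over an infinite field is not a finite union of proper subspaces. -/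
theorem exists_injective_twist {k E ks Ω : Type*} [Field k] [Infinite k] [Field E] [Algebra k E]
    [FiniteDimensional k E] [Field ks] [Algebra k ks] [Field Ω]
    (f : ks →+* Ω) (y : (E →ₐ[k] ks) → Ω) (hy : Function.Injective y) :
    ∃ w : E, Function.Injective
      fun π : Equiv.Perm (E →ₐ[k] ks) => ∑ i, f (i w) * y (π i) := by
  classical
  let V (q : {q : Equiv.Perm (E →ₐ[k] ks) × Equiv.Perm (E →ₐ[k] ks) // q.1 ≠ q.2}) :
      Submodule k E :=
    { carrier := {w | ∑ i, f (i w) * y (q.1.1 i) = ∑ i, f (i w) * y (q.1.2 i)}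
      zero_mem' := by simp
      add_mem' := by
        intro a b ha hb
        simp only [Set.mem_ofPred_eq, map_add, add_mul, Finset.sum_add_distrib] at *
        rw [ha, hb]
      smul_mem' := by
        intro c a ha
        simp only [Set.mem_ofPred_eq, Algebra.smul_def, map_mul, mul_assoc] at *
        simp only [AlgHom.commutes, ← Finset.mul_sum]
        rw [ha] }
  by_contra! hcon
  have hcov : ⋃ q, (V q : Set E) = Set.univ := by
    rw [Set.eq_univ_iff_forall]
    intro w
    have := hcon w
    rw [Function.Injective] at this
    push Not at this
    obtain ⟨π, π', h, hne⟩ := this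
    exact Set.mem_iUnion.2 ⟨⟨(π, π'), hne⟩, h⟩
  obtain ⟨⟨⟨π, π'⟩, hne⟩, hq⟩ := Subspace.exists_eq_top_of_iUnion_eq_univ hcov
  apply hne
  have hli := (linearIndependent_monoidHom E Ω).comp
    (fun i : E →ₐ[k] ks => ((f.comp (i : E →+* ks) : E →+* Ω) : E →* Ω)) (by
      intro i j hij
      ext x
      exact f.injective (DFunLike.congr_fun hij x))
  rw [Fintype.linearIndependent_iff] at hli
  have h0 := hli (fun i => y (π i) - y (π' i)) (by
    ext w
    have hw : w ∈ V ⟨(π, π'), hne⟩ := by rw [hq]; trivial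
    have hw' : ∑ i, f (i w) * y (π i) = ∑ i, f (i w) * y (π' i) := hw
    simp only [Finset.sum_apply, Pi.smul_apply, Function.comp_apply, smul_eq_mul, Pi.zero_apply]
    rw [← sub_eq_zero, ← Finset.sum_sub_distrib] at hw'
    rw [← hw']
    refine Finset.sum_congr rfl fun i _ => ?_
    change (y (π i) - y (π' i)) * f (i w) = _
    ring)
  ext1 i
  exact hy (sub_eq_zero.1 (h0 i))

/-- A monic polynomial with distinct roots that are all conjugate is irreducible. -/
theorem irreducible_of_transitive {F Ω κ : Type*} [Field F] [Field Ω] [Algebra F Ω]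
    [Fintype κ] [Nonempty κ] (Q : F[X]) (hQ : Q.Monic) (z : κ → Ω) (hz : Function.Injective z)
    (hprod : Q.map (algebraMap F Ω) = ∏ j, (X - C (z j)))
    (htrans : ∀ j j', ∃ σ : Ω ≃ₐ[F] Ω, σ (z j) = z j') : Irreducible Q := by
  obtain ⟨j₀⟩ := ‹Nonempty κ›
  have hroot : ∀ j, aeval (z j) Q = 0 := fun j => by
    rw [aeval_def, ← eval_map, hprod, eval_prod]
    exact Finset.prod_eq_zero (Finset.mem_univ j) (by simp)
  have hintegral : IsIntegral F (z j₀) := ⟨Q, hQ, by simpa [aeval_def] using hroot j₀⟩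
  have h1 : Q ∣ minpoly F (z j₀) := by
    rw [← Polynomial.map_dvd_map' (algebraMap F Ω), hprod]
    refine Finset.prod_dvd_of_coprime
      (fun a _ b _ hab => pairwise_coprime_X_sub_C hz hab) fun j _ => ?_
    obtain ⟨σ, hσ⟩ := htrans j₀ j
    rw [dvd_iff_isRoot, IsRoot.def, eval_map, ← aeval_def, ← hσ, ← minpoly.algEquiv_eq σ]
    exact minpoly.aeval _ _
  exact (associated_of_dvd_dvd h1 (minpoly.dvd F _ (hroot j₀))).irreducible_iff.2
    (minpoly.irreducible hintegral)

/-- For a polynomial that becomes separable over a field containing the coefficient ring, the resultant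
with the derivative is a nonzero element of the ideal generated by the two. -/
theorem exists_resultant_identity {R Ω : Type*} [CommRing R] [Field Ω] (h : R →+* Ω)
    (hinj : Function.Injective h) (Φ : R[X]) (hdeg : Φ.natDegree ≠ 0)
    (hsep : (Φ.map h).Separable) :
    ∃ r : R, r ≠ 0 ∧ ∃ a b : R[X], Φ * a + derivative Φ * b = C r := by
  obtain ⟨a, b, -, -, hab⟩ := exists_mul_add_mul_eq_C_resultant Φ (derivative Φ) le_rfl le_rfl
    (Or.inl hdeg)
  refine ⟨_, ?_, a, b, hab⟩
  intro h0
  have h1 := congrArg h h0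
  rw [← resultant_map_map, map_zero, ← natDegree_map_eq_of_injective hinj Φ,
    ← natDegree_map_eq_of_injective hinj (derivative Φ), resultant_eq_zero_iff] at h1
  rw [Separable, derivative_map] at hsep
  grind

/-- The PAC property for polynomials written in `k[t][Z]`. -/
theorem IsPAC.infinite_zeros {k : Type*} [Field k] (hPAC : IsPAC k) (Φ : k[X][X])
    (hirr : Irreducible (Φ.map (mapRingHom (algebraMap k (AlgebraicClosure k))))) :
    {x : k × k | (Φ.map (evalRingHom x.1)).eval x.2 = 0}.Infinite := by
  have hmap : MvPolynomial.map (algebraMap k (AlgebraicClosure k))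
      (Bivariate.equivMvPolynomial k Φ) = Bivariate.equivMvPolynomial (AlgebraicClosure k)
        (Φ.map (mapRingHom (algebraMap k (AlgebraicClosure k)))) := by
    have : (MvPolynomial.map (algebraMap k (AlgebraicClosure k))).comp
        (Bivariate.equivMvPolynomial k : k[X][X] →+* MvPolynomial (Fin 2) _) =
        (Bivariate.equivMvPolynomial (AlgebraicClosure k)
          : (AlgebraicClosure k)[X][X] →+* MvPolynomial (Fin 2) _).comp
        (mapRingHom (mapRingHom (algebraMap k (AlgebraicClosure k)))) := by
      ext <;> simp
    exact RingHom.congr_fun this Φ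
  have h := hPAC (Bivariate.equivMvPolynomial k Φ) (by
    rw [hmap]
    exact (MulEquiv.irreducible_iff (Bivariate.equivMvPolynomial (AlgebraicClosure k))).2 hirr)
  convert h using 3 with x
  have : (evalRingHom x.2).comp (mapRingHom (evalRingHom x.1)) =
      (MvPolynomial.eval ![x.1, x.2]).comp
        (Bivariate.equivMvPolynomial k : k[X][X] →+* MvPolynomial (Fin 2) _) := by
    ext <;> simp
  exact Eq.congr_left (RingHom.congr_fun this Φ)

theorem IsPAC.infinite {k : Type*} [Field k] (hPAC : IsPAC k) : Infinite k := by
  by_contra hfin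
  rw [not_infinite_iff_finite] at hfin
  refine hPAC.infinite_zeros X ?_ (Set.toFinite _)
  rw [map_X]
  exact prime_X.irreducible

/-- A curve `Φ(t, z) = 0` with `Φ` monic in `z` has finitely many points over each `t`, so infinitely
many points cannot all lie over the zeros of `r`. -/
theorem exists_good_zero {k : Type*} [Field k] (Φ : k[X][X]) (hΦ : Φ.Monic) (r : k[X])
    (hr : r ≠ 0) (hinf : {x : k × k | (Φ.map (evalRingHom x.1)).eval x.2 = 0}.Infinite) :
    ∃ t z : k, (Φ.map (evalRingHom t)).eval z = 0 ∧ r.eval t ≠ 0 := by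
  classical
  by_contra! hcon
  apply hinf
  refine Set.Finite.subset (Finset.finite_toSet (r.roots.toFinset.biUnion fun t =>
    (Φ.map (evalRingHom t)).roots.toFinset.image fun z => (t, z))) ?_
  rintro ⟨t, z⟩ hx
  have hx' : (Φ.map (evalRingHom t)).eval z = 0 := hx
  simp only [Finset.coe_biUnion, Set.mem_iUnion, Finset.coe_image]
  refine ⟨t, by simpa [hr] using hcon t z hx', z, ?_, rfl⟩
  simp only [Finset.mem_coe, Multiset.mem_toFinset]
  exact (mem_roots (hΦ.map _).ne_zero).2 hx'

/-! ### From a root of the resolvent to a generator -/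

/-- The roots of a split monic polynomial, indexed by a given type. -/
theorem exists_prod_X_sub_C {K ι : Type*} [Field K] [Fintype ι] {Q : K[X]} (hQ : Q.Monic)
    (hs : Q.Splits) (hdeg : Q.natDegree = Fintype.card ι) :
    ∃ y : ι → K, Q = ∏ i, (X - C (y i)) := by
  have hlen : Q.roots.toList.length = Fintype.card ι := by
    rw [Multiset.length_toList, ← hdeg, hs.natDegree_eq_card_roots]
  let e : ι ≃ Fin Q.roots.toList.length := Fintype.equivFinOfCardEq hlen.symm
  refine ⟨fun i => Q.roots.toList.get (e i), ?_⟩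
  rw [Fintype.prod_equiv e _ (fun j => X - C (Q.roots.toList.get j)) fun i => rfl]
  have h1 : List.ofFn (fun j => (X - C (Q.roots.toList.get j) : K[X])) =
      Q.roots.toList.map fun a => X - C a := by
    conv_rhs => rw [← List.ofFn_get Q.roots.toList, List.map_ofFn]
    rfl
  rw [← List.prod_ofFn, h1, ← Multiset.prod_coe, ← Multiset.map_coe, Multiset.coe_toList]
  exact hs.eq_prod_roots_of_monic hQ

/-- If two of the `y i` coincided, swapping them would not change the resolvent sum. -/
theorem injective_of_resolvent_sums {ι S : Type*} [Fintype ι] [CommRing S] (w y : ι → S)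
    (h : Function.Injective fun π : Equiv.Perm ι => ∑ i, w i * y (π i)) :
    Function.Injective y := by
  classical
  intro i j hij
  by_contra hne
  have h1 : Equiv.swap i j = 1 := h (by
    refine Finset.sum_congr rfl fun l _ => ?_
    congr 1
    rw [Equiv.swap_apply_def, Equiv.Perm.one_apply]
    split_ifs with h1 h2
    · rw [h1, hij]
    · rw [h2, hij]
    · rfl)
  exact hne (Equiv.swap_eq_one_iff.1 h1)

/-- A `k`-rational root `z` of a resolvent with distinct roots, twisted by the embeddings of `E`,
identifies the Galois action on the roots of `Q` with the action on the embeddings of `E`. The root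
attached to an embedding `i₀` then lies in `i₀ E` and has the same stabilizer as `i₀`, so it generates
`i₀ E` over `k`. -/
theorem primitive_root_of_resolvent_root {k E ks : Type*} [Field k] [Field E] [Algebra k E]
    [FiniteDimensional k E] [Algebra.IsSeparable k E] [Field ks] [Algebra k ks] [IsGalois k ks]
    (hA : ∀ x : E, ((minpoly k x).map (algebraMap k ks)).Splits)
    (Q : k[X]) (hQ : Q.Monic) (hdeg : Q.natDegree = Module.finrank k E)
    (y : (E →ₐ[k] ks) → ks) (hy : Q.map (algebraMap k ks) = ∏ i, (X - C (y i))) (w : E)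
    (hinj : Function.Injective fun π : Equiv.Perm (E →ₐ[k] ks) => ∑ i, i w * y (π i))
    (z : k) (π : Equiv.Perm (E →ₐ[k] ks)) (hz : algebraMap k ks z = ∑ i, i w * y (π i)) :
    Irreducible Q ∧ ∃ x : E, aeval x Q = 0 ∧ IntermediateField.adjoin k {x} = ⊤ := by
  have hyinj := injective_of_resolvent_sums _ _ hinj
  have hroot : ∀ a : ks, aeval a Q = 0 ↔ ∃ i, a = y i := fun a => by
    rw [aeval_def, ← eval_map, hy, eval_prod, Finset.prod_eq_zero_iff]
    simp [sub_eq_zero]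
  let T (τ : ks ≃ₐ[k] ks) : Equiv.Perm (E →ₐ[k] ks) := AlgEquiv.arrowCongr AlgEquiv.refl τ
  have hT : ∀ τ i x, T τ i x = τ (i x) := fun τ i x => rfl
  -- Applying `τ` to `z = ∑ i, i w * y (π i)` permutes both the weights and the roots. As `τ z = z` and
  -- the resolvent sums are distinct, the two permutations agree after conjugation by `π`.
  have hact : ∀ (τ : ks ≃ₐ[k] ks) i, τ (y (π i)) = y (π (T τ i)) := by
    intro τ
    have h1 : ∀ i, ∃ j, τ (y i) = y j := fun i => by
      rw [← hroot, ← AlgEquiv.coe_toAlgHom, aeval_algHom_apply, (hroot _).2 ⟨i, rfl⟩, map_zero]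
    choose ρ' hρ' using h1
    have hρinj : Function.Injective ρ' := fun a b hab =>
      hyinj (τ.injective (by rw [hρ', hρ', hab]))
    let ρ : Equiv.Perm (E →ₐ[k] ks) :=
      Equiv.ofBijective ρ' (Finite.injective_iff_bijective.1 hρinj)
    have h2 : ρ * π * (T τ)⁻¹ = π := by
      apply hinj
      change ∑ i, i w * y ((ρ * π * (T τ)⁻¹) i) = ∑ i, i w * y (π i)
      rw [← hz, ← τ.commutes z, hz, map_sum]
      symm
      refine Fintype.sum_equiv (T τ) _ _ fun i => ?_
      rw [map_mul, hT, hρ']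
      simp [ρ]
    intro i
    rw [hρ', ← Equiv.Perm.mul_apply π, ← mul_inv_eq_iff_eq_mul.1 h2]
    rfl
  have hne : Nonempty (E →ₐ[k] ks) := by
    have h1 := AlgHom.card_of_splits k E ks hA
    have h2 : 0 < Module.finrank k E := Module.finrank_pos
    rw [← h1] at h2
    exact Fintype.card_pos_iff.1 h2
  obtain ⟨i₀⟩ := hne
  have hmem : y (π i₀) ∈ i₀.fieldRange := by
    rw [← InfiniteGalois.fixedField_fixingSubgroup i₀.fieldRange,
      IntermediateField.mem_fixedField_iff]
    intro τ hτ
    rw [hact]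
    congr 2
    ext x
    rw [hT]
    exact (IntermediateField.mem_fixingSubgroup_iff _ _).1 hτ _ ⟨x, rfl⟩
  obtain ⟨x, hx⟩ := hmem
  have hx' : i₀ x = y (π i₀) := hx
  have hxQ : aeval x Q = 0 := by
    apply i₀.injective
    change i₀ (aeval x Q) = i₀ 0
    rw [← aeval_algHom_apply, map_zero, hroot]
    exact ⟨_, hx'⟩
  have hprim : IntermediateField.adjoin k {x} = ⊤ := by
    rw [Field.primitive_element_iff_algHom_eq_of_eval k ks hA x i₀]
    intro ψ hψ
    -- an automorphism carrying `i₀` to `ψ`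
    obtain ⟨τ, hτ⟩ : ∃ τ : ks ≃ₐ[k] ks, T τ i₀ = ψ := by
      let : Algebra E ks := i₀.toAlgebra
      have : IsScalarTower k E ks := IsScalarTower.of_algebraMap_eq fun r => (i₀.commutes r).symm
      refine ⟨AlgEquiv.ofBijective (ψ.liftNormal ks) (AlgHom.normal_bijective k ks ks _), ?_⟩
      ext a
      exact ψ.liftNormal_commutes ks a
    have h1 := hact τ i₀
    rw [hτ, ← hx', ← hT, hτ, ← hψ, hx'] at h1
    exact π.injective (hyinj h1)
  refine ⟨?_, x, hxQ, hprim⟩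
  have hintegral : IsIntegral k x := IsIntegral.of_finite k x
  have hmin : Q = minpoly k x := by
    refine eq_of_monic_of_dvd_of_natDegree_le (minpoly.monic hintegral) hQ (minpoly.dvd k x hxQ) ?_
    rw [hdeg, ← (Field.primitive_element_iff_minpoly_natDegree_eq k x).1 hprim]
  rw [hmin]
  exact minpoly.irreducible hintegral

/-! ### Specialization over PAC fields -/

universe u v

/-- If `P ∈ k[t][Y]` has symmetric Galois group over `Kb(t)`, a suitable weight `w ∈ E` gives a twisted
resolvent `Φ ∈ k[t][Z]` that is irreducible over `Kb`, since the Galois group permutes its `n!`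
distinct roots transitively. Moreover `Φ` specializes to the resolvent of the specialization of `P`,
and `r` is a nonzero polynomial in `t` such that the specialization of `Φ` at `t` is
separable whenever `r(t) ≠ 0`, by the identity `Φ * a + derivative Φ * b = r`. All fields but `E` live in one universe because the specialization property is stated for one universe. -/
theorem exists_geometric_resolvent {k ks Kb F₂ Ω : Type u} {E : Type v} [Field k] [Infinite k]
    [Field E] [Algebra k E] [FiniteDimensional k E] [Field ks] [Algebra k ks] [IsGalois k ks]
    [Field Kb] [Algebra k Kb] [Algebra ks Kb] [IsScalarTower k ks Kb]
    [Field F₂] [Algebra Kb[X] F₂] [IsFractionRing Kb[X] F₂]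
    [Field Ω] [IsAlgClosed Ω] [Algebra F₂ Ω] [Normal F₂ Ω] {n : ℕ} (hn : 2 ≤ n)
    [DecidableEq (E →ₐ[k] ks)] (hι : Fintype.card (E →ₐ[k] ks) = n)
    {P : k[X][X]} (hP : P.Monic) (hdeg : P.natDegree = n)
    (hcard : n.factorial ≤
      Nat.card ((P.map (mapRingHom (algebraMap k Kb))).map (algebraMap Kb[X] F₂)).Gal) :
    ∃ (w : E) (Φ : k[X][X]) (r : k[X]), Φ.Monic ∧
      Irreducible (Φ.map (mapRingHom (algebraMap k Kb))) ∧ r ≠ 0 ∧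
      (∃ a b : k[X][X], Φ * a + derivative Φ * b = C r) ∧
      ∀ (t : k) (S : Type u) [Field S] [Algebra k S] (f : ks →ₐ[k] S) (y : (E →ₐ[k] ks) → S),
        (P.map (evalRingHom t)).map (algebraMap k S) = ∏ i, (X - C (y i)) →
        ((Φ.map (evalRingHom t)).map (algebraMap k S)) =
          permResolvent (fun i => f (i w)) y := by
  set Q := (P.map (mapRingHom (algebraMap k Kb))).map (algebraMap Kb[X] F₂) with hQ
  have hQm : Q.Monic := (hP.map _).map _
  have hQdeg : Q.natDegree = n := by
    rw [hQ, (hP.map _).natDegree_map, hP.natDegree_map, hdeg]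
  obtain ⟨y, hyinj, hyQ, hσ⟩ := exists_roots_of_card_gal hn hQm hQdeg hcard Ω
    (IsAlgClosed.splits _) (E →ₐ[k] ks) hι
  let g : ks →+* F₂ := (algebraMap Kb[X] F₂).comp (C.comp (algebraMap ks Kb))
  let f : ks →+* Ω := (algebraMap F₂ Ω).comp g
  let h₂ : k[X] →+* F₂ := (algebraMap Kb[X] F₂).comp (mapRingHom (algebraMap k Kb))
  let h : k[X] →+* Ω := (algebraMap F₂ Ω).comp h₂
  have hinj : Function.Injective h :=
    (algebraMap F₂ Ω).injective.comp ((IsFractionRing.injective Kb[X] F₂).comp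
      (map_injective _ (algebraMap k Kb).injective))
  obtain ⟨w, hw⟩ := exists_injective_twist f y hyinj
  obtain ⟨Φ, hΦm, hΦ⟩ := exists_twisted_resolvent hι (fun i : E →ₐ[k] ks => i w)
    (fun τ => ⟨AlgEquiv.arrowCongr AlgEquiv.refl τ, fun i => rfl⟩) P
  have hcompat : h.comp (algebraMap k k[X]) = f.comp (algebraMap k ks) := by
    ext a
    simp [h, h₂, f, g, ← IsScalarTower.algebraMap_apply k ks Kb]
  have hres := hΦ Ω h f y hcompat (by rw [← hyQ, hQ, map_map, map_map]; rfl)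
  have hres' : Φ.map h = ∏ π : Equiv.Perm (E →ₐ[k] ks), (X - C (∑ i, f (i w) * y (π i))) := hres
  have hsep : (Φ.map h).Separable := by
    rw [hres']
    exact separable_prod_X_sub_C_iff.2 hw
  have hΦdeg : Φ.natDegree ≠ 0 := by
    rw [← hΦm.natDegree_map h, hres, permResolvent_natDegree]
    exact Nat.factorial_ne_zero _
  obtain ⟨r, hr, hab⟩ := exists_resultant_identity h hinj Φ hΦdeg hsep
  refine ⟨w, Φ, r, hΦm, ?_, hr, hab, ?_⟩
  · rw [(hΦm.map _).irreducible_iff_irreducible_map_fraction_map (K := F₂)]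
    refine irreducible_of_transitive (Ω := Ω) _ ((hΦm.map _).map _) _ hw ?_ ?_
    · rw [← hres', map_map, map_map]
      rfl
    · intro π π'
      obtain ⟨σ, hσ⟩ := hσ (π' * π⁻¹)
      refine ⟨σ, ?_⟩
      change σ (∑ i, f (i w) * y (π i)) = ∑ i, f (i w) * y (π' i)
      rw [map_sum]
      refine Finset.sum_congr rfl fun i _ => ?_
      rw [map_mul, hσ]
      congr 1
      · exact σ.commutes _
      · simp
  · intro t S _ _ f' y' hy'
    have := hΦ S ((algebraMap k S).comp (evalRingHom t)) (f' : ks →+* S) y'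
      (by ext a; simp) (by rw [← hy', map_map])
    rw [map_map, this]
    rfl

/-- Over a PAC field `k`, a polynomial in `k[t][Y]` of degree `n` with symmetric Galois group over
`(AlgebraicClosure k)(t)` has a specialization that realizes a given separable extension of
degree `n`. -/
theorem IsPAC.exists_specialization {k : Type u} {E : Type v} [Field k] [Field E] [Algebra k E]
    [FiniteDimensional k E] [Algebra.IsSeparable k E] (hPAC : IsPAC k) {n : ℕ} (hn : 2 ≤ n)
    (hE : Module.finrank k E = n) {P : k[X][X]} (hP : P.Monic) (hdeg : P.natDegree = n)
    (hcard : n.factorial ≤ Nat.card ((P.map (mapRingHom (algebraMap k (AlgebraicClosure k)))).map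
      (algebraMap (AlgebraicClosure k)[X] (FractionRing (AlgebraicClosure k)[X]))).Gal) :
    ∃ t : k, Irreducible (P.map (evalRingHom t)) ∧
      ∃ x : E, aeval x (P.map (evalRingHom t)) = 0 ∧ IntermediateField.adjoin k {x} = ⊤ := by
  classical
  have := hPAC.infinite
  have hA : ∀ x : E, ((minpoly k x).map (algebraMap k (SeparableClosure k))).Splits := fun x =>
    IsSepClosed.splits_codomain _ (Algebra.IsSeparable.isSeparable k x)
  have hι : Fintype.card (E →ₐ[k] SeparableClosure k) = n := by
    rw [← hE]
    exact AlgHom.card_of_splits k E _ hA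
  obtain ⟨w, Φ, r, hΦm, hirr, hr, ⟨a, b, hab⟩, hΦ⟩ := exists_geometric_resolvent
    (ks := SeparableClosure k) (Kb := AlgebraicClosure k)
    (F₂ := FractionRing (AlgebraicClosure k)[X])
    (Ω := AlgebraicClosure (FractionRing (AlgebraicClosure k)[X])) hn hι hP hdeg hcard
  obtain ⟨t, z, hz, hrt⟩ := exists_good_zero Φ hΦm r hr (hPAC.infinite_zeros Φ hirr)
  refine ⟨t, ?_⟩
  set Q := P.map (evalRingHom t) with hQ
  have hQm : Q.Monic := hP.map _
  have hQdeg : Q.natDegree = Fintype.card (E →ₐ[k] SeparableClosure k) := by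
    rw [hQ, hP.natDegree_map, hdeg, hι]
  have hsep : (Φ.map (evalRingHom t)).Separable := by
    rw [separable_def']
    have h1 := congrArg (Polynomial.map (evalRingHom t)) hab
    simp only [Polynomial.map_add, Polynomial.map_mul, map_C, coe_evalRingHom,
      ← derivative_map] at h1
    refine ⟨C (r.eval t)⁻¹ * a.map (evalRingHom t), C (r.eval t)⁻¹ * b.map (evalRingHom t), ?_⟩
    have h2 : (C (r.eval t)⁻¹ * C (r.eval t) : k[X]) = 1 := by
      rw [← C_mul, inv_mul_cancel₀ hrt, C_1]
    rw [← h2, ← h1]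
    ring
  have hdist : ∀ (S : Type u) [Field S] [Algebra k S] (f : SeparableClosure k →ₐ[k] S)
      (y : (E →ₐ[k] SeparableClosure k) → S), Q.map (algebraMap k S) = ∏ i, (X - C (y i)) →
      Function.Injective fun π : Equiv.Perm (E →ₐ[k] SeparableClosure k) =>
        ∑ i, f (i w) * y (π i) := by
    intro S _ _ f y hy
    have h1 := hΦ t S f y hy
    unfold permResolvent at h1
    rw [← separable_prod_X_sub_C_iff, ← h1]
    exact hsep.map
  -- Separability has to be read off over the algebraic closure first: only then is `Q` known to
  -- split over the separable closure.
  have hQsep : Q.Separable := by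
    obtain ⟨y, hy⟩ := exists_prod_X_sub_C (ι := E →ₐ[k] SeparableClosure k)
      (hQm.map (algebraMap k (AlgebraicClosure k))) (IsAlgClosed.splits _)
      (by rw [hQm.natDegree_map, hQdeg])
    rw [← separable_map (algebraMap k (AlgebraicClosure k)), hy, separable_prod_X_sub_C_iff]
    exact injective_of_resolvent_sums _ _
      (hdist _ (IsScalarTower.toAlgHom k (SeparableClosure k) (AlgebraicClosure k)) y hy)
  obtain ⟨y, hy⟩ := exists_prod_X_sub_C (ι := E →ₐ[k] SeparableClosure k)
    (hQm.map (algebraMap k (SeparableClosure k))) (IsSepClosed.splits_codomain _ hQsep)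
    (by rw [hQm.natDegree_map, hQdeg])
  have hz' : eval (algebraMap k (SeparableClosure k) z)
      ((Φ.map (evalRingHom t)).map (algebraMap k (SeparableClosure k))) = 0 := by
    rw [eval_map_algebraMap, aeval_algebraMap_apply, coe_aeval_eq_eval, hz, map_zero]
  rw [hΦ t _ (AlgHom.id k _) y hy, permResolvent, eval_prod, Finset.prod_eq_zero_iff] at hz'
  obtain ⟨π, -, hπ⟩ := hz'
  rw [eval_sub, eval_X, eval_C, sub_eq_zero] at hπ
  exact primitive_root_of_resolvent_root hA Q hQm (by rw [hQdeg, hι, hE]) y hy w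
    (hdist _ (AlgHom.id k _) y hy) z π hπ

theorem trinomialFamily_map {R S : Type*} [CommRing R] [CommRing S] (f : R →+* S)
    (n m α β : ℕ) :
    (trinomialFamily R n m α β).map (mapRingHom f) = trinomialFamily S n m α β := by
  simp [trinomialFamily]

theorem stmt_15 (p : ℕ) [Fact p.Prime] (n m : ℕ) (hn : 2 ≤ n)
    (hm : 1 ≤ m) (hmn : m < n)
    (hGal : Nat.card (genericTrinomial p n m).Gal = n.factorial)
    (k E : Type*) [Field k] [Field E] [Algebra k E] [Algebra.IsSeparable k E]
    [CharP k p] (hPAC : IsPAC k)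
    (hdeg : Module.finrank k E = n) :
    ∃ a b : k, Irreducible (X ^ n + C a * X ^ m + C b) ∧
      ∃ x : E, Polynomial.aeval x (X ^ n + C a * X ^ m + C b) = 0 ∧
        IntermediateField.adjoin k {x} = ⊤ := by
  have hfin : FiniteDimensional k E := FiniteDimensional.of_finrank_pos (by omega)
  have hcop : n.Coprime m :=
    coprime_of_card_gal (F := AlgebraicClosure (ZMod p)) (K := FpBarUV p) hn hm hmn _ _
      (by
        rw [Ne, map_eq_zero_iff _ (IsFractionRing.injective _ _)]
        exact MvPolynomial.X_ne_zero 1) hGal.ge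
  obtain ⟨α, β, hαβ⟩ := exists_exponents hm hmn hcop
  have hfam := hGal.ge.trans
    (card_gal_le_card_gal_family (F := AlgebraicClosure (ZMod p)) (K := FpBarUV p) hm hmn hαβ)
  have : CharP (AlgebraicClosure k) p := charP_of_injective_algebraMap
    (algebraMap k (AlgebraicClosure k)).injective p
  let : Algebra (ZMod p) (AlgebraicClosure k) := ZMod.algebra _ p
  let : Algebra (AlgebraicClosure (ZMod p)) (AlgebraicClosure k) :=
    (IsAlgClosed.lift :
      AlgebraicClosure (ZMod p) →ₐ[ZMod p] AlgebraicClosure k).toRingHom.toAlgebra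
  have hbase := card_gal_map_of_isAlgClosed (K := AlgebraicClosure k) _
    (FractionRing (AlgebraicClosure k)[X]) hn (monic_trinomial' hm hmn _ _)
    (natDegree_trinomial' hm hmn _ _) hfam
  have hbase' : n.factorial ≤ Nat.card (((trinomialFamily k n m α β).map
      (mapRingHom (algebraMap k (AlgebraicClosure k)))).map
      (algebraMap (AlgebraicClosure k)[X] (FractionRing (AlgebraicClosure k)[X]))).Gal := by
    rw [trinomialFamily_map, ← trinomialFamily_map
      (algebraMap (AlgebraicClosure (ZMod p)) (AlgebraicClosure k))]
    exact hbase
  obtain ⟨t, ht⟩ := hPAC.exists_specialization hn hdeg (monic_trinomial' hm hmn _ _)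
    (natDegree_trinomial' hm hmn _ _) hbase'
  refine ⟨t ^ α, t ^ β, ?_⟩
  simpa [trinomialFamily] using ht
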